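/- arXiv:1810.08372 — 2 statements merged into one kernel-verified Lean document; each statement's English description precedes it below -/
import Mathlib

section
/- Let μ ≥ 1 be an integer and E a group. Suppose there exists an injective group homomorphism from E into a direct product DihedralGroup m₀ × ((i : Fin k) → DihedralGroup (m i)) × Q, where m₀ : ℕ and m : Fin k → ℕ are arbitrary (the value 0 giving the infinite dihedral group) and Q is a group in which q^μ = 1 for every q ∈ Q. Then for all g, h ∈ E, the element h^{μ+2} · g · h^{−(μ+2)} belongs to the subgroup of E generated by the set {h^i · g · h^{−i} : 0 ≤ i ≤ μ+1}. -/
/-- In a dihedral group, conjugation by `h ^ (n + 2)` is expressed through conjugation by `h ^ n`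
and by `h ^ 2`. -/
theorem DihedralGroup.conj_pow_add_two {N : ℕ} (g h : DihedralGroup N) (n : ℕ) :
    h ^ (n + 2) * g * (h ^ (n + 2))⁻¹ =
      h ^ n * g * (h ^ n)⁻¹ * g⁻¹ * (h ^ 2 * g * (h ^ 2)⁻¹) := by
  cases h with
  | sr a =>
    have h2 : (sr a : DihedralGroup N) ^ 2 = 1 := by rw [pow_two, sr_mul_self]
    simp [pow_add, h2]
  | r a =>
    cases g <;> simp only [r_pow, inv_r, inv_sr, r_mul_r, r_mul_sr, sr_mul_r, sr_mul_sr] <;>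
      congr 1 <;> push_cast <;> ring

/-- Let `μ ≥ 1` be an integer and `E` a group embedding into a direct product
`DihedralGroup m₀ × ((i : Fin k) → DihedralGroup (m i)) × Q` where `Q` has exponent dividing `μ`
(`q ^ μ = 1` for all `q`). Then for all `g, h ∈ E`, the element `h^(μ+2) * g * h^(-(μ+2))`
belongs to the subgroup generated by `{h^i * g * h^(-i) : 0 ≤ i ≤ μ + 1}`. -/
theorem dihedral_complexity
    {E Q : Type*} [Group E] [Group Q] (μ : ℕ) (hμ : 1 ≤ μ)
    (k m₀ : ℕ) (m : Fin k → ℕ)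
    (φ : E →* DihedralGroup m₀ × ((i : Fin k) → DihedralGroup (m i)) × Q)
    (hφ : Function.Injective φ)
    (hQ : ∀ q : Q, q ^ μ = 1)
    (g h : E) :
    h ^ (μ + 2) * g * (h ^ (μ + 2))⁻¹ ∈
      Subgroup.closure {x : E | ∃ i : ℕ, i ≤ μ + 1 ∧ x = h ^ i * g * (h ^ i)⁻¹} := by
  have key : h ^ (μ + 2) * g * (h ^ (μ + 2))⁻¹ =
      h ^ μ * g * (h ^ μ)⁻¹ * g⁻¹ * (h ^ 2 * g * (h ^ 2)⁻¹) := by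
    apply hφ
    refine Prod.ext ?_ (Prod.ext (funext fun i => ?_) ?_)
    · simpa using DihedralGroup.conj_pow_add_two (φ g).1 (φ h).1 μ
    · simpa using DihedralGroup.conj_pow_add_two ((φ g).2.1 i) ((φ h).2.1 i) μ
    · simp [pow_add, hQ]
  rw [key]
  refine mul_mem (mul_mem ?_ (inv_mem ?_)) ?_ <;> apply Subgroup.subset_closure
  · exact ⟨μ, by omega, rfl⟩
  · exact ⟨0, by omega, by simp⟩
  · exact ⟨2, by omega, rfl⟩
end

section
/- Let E be a group, C a finite normal subgroup of E, and g ∈ E such that the cyclic subgroup generated by the image ḡ of g in E/C is infinite, is a normal subgroup of E/C, and has index at most 2 in E/C. Let μ be a positive integer divisible by the exponent of the holomorph Hol(C) = C ⋊ Aut(C) (the semidirect product of C by its automorphism group for the natural action). Then: (1) for every u ∈ E, u · g^μ · u⁻¹ = g^μ or u · g^μ · u⁻¹ = g^{−μ}; (2) consequently the subgroup ⟨g^μ⟩ = Subgroup.zpowers (g^μ) is normal in E; and (3) the natural homomorphism from E to (E/C) × (E/⟨g^μ⟩) (given by the two quotient maps) is injective. -/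
/-- The power of a product `c * h` with `c` in a normal subgroup `C`, computed in the holomorph
of `C`. -/
theorem Subgroup.mul_pow_eq_holomorph_left_mul_pow {E : Type*} [Group E] (C : Subgroup E)
    [C.Normal] (c : C) (h : E) (n : ℕ) :
    ((c : E) * h) ^ n =
      (((⟨c, MulAut.conjNormal h⟩ : C ⋊[MonoidHom.id (MulAut C)] MulAut C) ^ n).left : E)
        * h ^ n := by
  induction n with
  | zero => simp
  | succ n ih =>
    rw [pow_succ' (_ * _), ih, pow_succ' (_ : C ⋊[MonoidHom.id (MulAut C)] MulAut C),
      SemidirectProduct.mul_left, pow_succ' h]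
    simp [mul_assoc]

/-- If `n` is a multiple of the exponent of the holomorph of a normal subgroup `C`, then
`n`-th powers depend only on cosets of `C`. -/
theorem Subgroup.pow_eq_pow_of_mk_eq_mk {E : Type*} [Group E] (C : Subgroup E) [C.Normal]
    {n : ℕ} (hn : Monoid.exponent (C ⋊[MonoidHom.id (MulAut C)] MulAut C) ∣ n) {x y : E}
    (hxy : (x : E ⧸ C) = y) : x ^ n = y ^ n := by
  have hc : x * y⁻¹ ∈ C := by
    rw [← QuotientGroup.eq_one_iff, QuotientGroup.mk_mul, hxy, ← QuotientGroup.mk_mul,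
      mul_inv_cancel, QuotientGroup.mk_one]
  have h := C.mul_pow_eq_holomorph_left_mul_pow ⟨x * y⁻¹, hc⟩ y n
  rw [Monoid.exponent_dvd_iff_forall_pow_eq_one.mp hn] at h
  simpa using h

/-- A conjugate of a generator of an infinite cyclic normal subgroup is that generator or its
inverse. -/
theorem conj_eq_self_or_inv_of_normal_zpowers {G : Type*} [Group G] {a : G}
    (ha : ¬IsOfFinOrder a) (hnorm : (Subgroup.zpowers a).Normal) (u : G) :
    u * a * u⁻¹ = a ∨ u * a * u⁻¹ = a⁻¹ := by
  obtain ⟨k, hk⟩ := hnorm.conj_mem a (Subgroup.mem_zpowers a) u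
  obtain ⟨l, hl⟩ := hnorm.conj_mem a (Subgroup.mem_zpowers a) u⁻¹
  simp only [inv_inv] at hk hl
  have hkl : a ^ (k * l) = a ^ (1 : ℤ) := by
    rw [zpow_mul, hk, conj_zpow, hl]
    group
  have hunit := injective_zpow_iff_not_isOfFinOrder.mpr ha hkl
  rcases Int.eq_one_or_neg_one_of_mul_eq_one hunit with rfl | rfl
  · left; simpa using hk.symm
  · right; simpa using hk.symm

/-- Let `E` be a group, `C` a finite normal subgroup of `E`, and `g ∈ E` whose image `ḡ` in
`E/C` generates an infinite cyclic subgroup which is normal of index at most `2` in `E/C`. Let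
`μ ≥ 1` be divisible by the exponent of the holomorph `Hol(C) = C ⋊ Aut(C)`. Then every `u ∈ E`
conjugates `g^μ` to `g^μ` or `g^(-μ)`, the subgroup `⟨g^μ⟩` is normal in `E`, and the natural
map `E → (E/C) × (E/⟨g^μ⟩)` given by the two quotient maps is injective. -/
theorem dihedral_pair_embeds_in_product
    {E : Type*} [Group E] (C : Subgroup E) [C.Normal] [Finite C]
    (g : E) (μ : ℕ) (hμ : 0 < μ)
    (hinf : Infinite (Subgroup.zpowers (QuotientGroup.mk g : E ⧸ C)))
    (hnorm : (Subgroup.zpowers (QuotientGroup.mk g : E ⧸ C)).Normal)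
    (hindex : (Subgroup.zpowers (QuotientGroup.mk g : E ⧸ C)).index = 1 ∨
      (Subgroup.zpowers (QuotientGroup.mk g : E ⧸ C)).index = 2)
    (hexp : Monoid.exponent (C ⋊[MonoidHom.id (MulAut C)] MulAut C) ∣ μ) :
    (∀ u : E, u * g ^ μ * u⁻¹ = g ^ μ ∨ u * g ^ μ * u⁻¹ = (g ^ μ)⁻¹) ∧
    (Subgroup.zpowers (g ^ μ)).Normal ∧
    Function.Injective (fun x : E =>
      ((QuotientGroup.mk x : E ⧸ C),
        (QuotientGroup.mk x : E ⧸ Subgroup.zpowers (g ^ μ)))) := by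
  have hfin : ¬IsOfFinOrder (g : E ⧸ C) := by
    rwa [← infinite_zpowers, ← Set.infinite_coe_iff]
  have hconj : ∀ u : E, u * g ^ μ * u⁻¹ = g ^ μ ∨ u * g ^ μ * u⁻¹ = (g ^ μ)⁻¹ := by
    intro u
    rw [← conj_pow, ← inv_pow]
    exact (conj_eq_self_or_inv_of_normal_zpowers hfin hnorm u).imp
      (C.pow_eq_pow_of_mk_eq_mk hexp) (C.pow_eq_pow_of_mk_eq_mk hexp)
  refine ⟨hconj, ⟨?_⟩, ?_⟩
  · rintro _ ⟨j, rfl⟩ u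
    change u * (g ^ μ) ^ j * u⁻¹ ∈ _
    rw [← conj_zpow]
    refine zpow_mem ?_ j
    rcases hconj u with h | h <;> simp [h]
  · intro x y hxy
    obtain ⟨hC, hZ⟩ := Prod.ext_iff.mp hxy
    obtain ⟨j, hj⟩ := QuotientGroup.eq.mp hZ
    have hmem := (QuotientGroup.eq_one_iff (N := C) _).mpr (QuotientGroup.eq.mp hC)
    have hpow : (g : E ⧸ C) ^ ((μ : ℤ) * j) = (g : E ⧸ C) ^ (0 : ℤ) := by
      rw [zpow_zero, ← hmem, ← hj, zpow_mul, zpow_natCast]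
      rfl
    have hzero := injective_zpow_iff_not_isOfFinOrder.mpr hfin hpow
    obtain rfl : j = 0 := by
      rcases mul_eq_zero.mp hzero with h | h <;> omega
    exact inv_mul_eq_one.mp (by simpa using hj.symm)
end
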